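/- Let n ≥ 1, suppose (A,b) satisfies Setting B, and let F : ℝⁿ → ℝⁿ be measurable, ℤⁿ-periodic with ∫_Y |F|² < ∞. Then there exists a measurable ℤⁿ-periodic function u : ℝⁿ → ℝ with ∫_Y u² < ∞ such that ∫_Y u(A:D²φ + b·∇φ) = −∫_Y F·∇φ for every twice continuously differentiable ℤⁿ-periodic φ : ℝⁿ → ℝ. Moreover, if u₁ and u₂ are two such solutions, then u₁ − u₂ = c·r almost everywhere for some constant c ∈ ℝ, where r is the invariant measure, i.e., the (a.e.-unique) measurable ℤⁿ-periodic function with ∫_Y r² < ∞, ∫_Y r = 1 and ∫_Y r(A:D²φ + b·∇φ) = 0 for all such test functions φ. -/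

import Mathlib

open MeasureTheory

noncomputable section

/-- The unit cell `Y = (0,1)^n`. -/
def unitCell (n : ℕ) : Set (Fin n → ℝ) := Set.univ.pi fun _ => Set.Ioo (0 : ℝ) 1

/-- Frobenius norm squared of a matrix. -/
def frobSq {n : ℕ} (M : Matrix (Fin n) (Fin n) ℝ) : ℝ := ∑ i, ∑ j, (M i j) ^ 2

/-- Frobenius inner product of two matrices. -/
def frobInner {n : ℕ} (M N : Matrix (Fin n) (Fin n) ℝ) : ℝ := ∑ i, ∑ j, M i j * N i j

/-- Euclidean norm squared of a vector. -/
def euclSq {n : ℕ} (v : Fin n → ℝ) : ℝ := ∑ i, (v i) ^ 2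

/-- Euclidean dot product. -/
def dotc {n : ℕ} (v w : Fin n → ℝ) : ℝ := ∑ i, v i * w i

/-- `ℤⁿ`-periodicity of a function on `ℝⁿ`. -/
def IsPeriodic {n : ℕ} {α : Type*} (f : (Fin n → ℝ) → α) : Prop :=
  ∀ (x : Fin n → ℝ) (k : Fin n → ℤ), f (x + fun i => (k i : ℝ)) = f x

/-- Partial derivative in direction `i`. -/
def pd {n : ℕ} (f : (Fin n → ℝ) → ℝ) (i : Fin n) (x : Fin n → ℝ) : ℝ :=
  fderiv ℝ f x (Pi.single i 1)

/-- Gradient. -/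
def grad {n : ℕ} (f : (Fin n → ℝ) → ℝ) (x : Fin n → ℝ) : Fin n → ℝ := fun i => pd f i x

/-- Hessian matrix. -/
def hess {n : ℕ} (f : (Fin n → ℝ) → ℝ) (x : Fin n → ℝ) : Matrix (Fin n) (Fin n) ℝ :=
  Matrix.of fun i j => pd (pd f j) i x

/-- Laplacian. -/
def lap {n : ℕ} (f : (Fin n → ℝ) → ℝ) (x : Fin n → ℝ) : ℝ := ∑ i, pd (pd f i) i x

/-- Jacobian matrix of a vector field: `(jac w x) i j = ∂_j w_i (x)`. -/
def jac {n : ℕ} (w : (Fin n → ℝ) → Fin n → ℝ) (x : Fin n → ℝ) : Matrix (Fin n) (Fin n) ℝ :=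
  Matrix.of fun i j => pd (fun y => w y i) j x

/-- Divergence of a vector field. -/
def divg {n : ℕ} (w : (Fin n → ℝ) → Fin n → ℝ) (x : Fin n → ℝ) : ℝ :=
  ∑ i, pd (fun y => w y i) i x

/-- Setting B: symmetric-valued, measurable, `ℤⁿ`-periodic, essentially bounded coefficients,
uniform ellipticity, and the Cordes-type condition with constant `δ ∈ (n/(n+π²), 1]`. -/
structure SettingB {n : ℕ} (A : (Fin n → ℝ) → Matrix (Fin n) (Fin n) ℝ)
    (b : (Fin n → ℝ) → Fin n → ℝ) (lam Lam δ : ℝ) : Prop where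
  symm : ∀ x, (A x).IsSymm
  measA : ∀ i j, Measurable fun x => A x i j
  measb : ∀ i, Measurable fun x => b x i
  perA : IsPeriodic A
  perb : IsPeriodic b
  bddA : ∃ C : ℝ, ∀ᵐ x ∂(volume : Measure (Fin n → ℝ)), frobSq (A x) ≤ C
  bddb : ∃ C : ℝ, ∀ᵐ x ∂(volume : Measure (Fin n → ℝ)), euclSq (b x) ≤ C
  lam_pos : 0 < lam
  lam_le_Lam : lam ≤ Lam
  ellip : ∀ᵐ x ∂(volume : Measure (Fin n → ℝ)), ∀ ξ : Fin n → ℝ,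
    lam * euclSq ξ ≤ dotc ξ (Matrix.mulVec (A x) ξ) ∧
      dotc ξ (Matrix.mulVec (A x) ξ) ≤ Lam * euclSq ξ
  delta_mem : δ ∈ Set.Ioc ((n : ℝ) / ((n : ℝ) + Real.pi ^ 2)) 1
  cordes : ∀ᵐ x ∂(volume : Measure (Fin n → ℝ)),
    (frobSq (A x) + euclSq (b x)) / (Matrix.trace (A x)) ^ 2 ≤ 1 / ((n : ℝ) - 1 + δ)

/-- The renormalization function `γ = tr A / (|A|² + |b|²)`. -/
def gam {n : ℕ} (A : (Fin n → ℝ) → Matrix (Fin n) (Fin n) ℝ)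
    (b : (Fin n → ℝ) → Fin n → ℝ) (x : Fin n → ℝ) : ℝ :=
  Matrix.trace (A x) / (frobSq (A x) + euclSq (b x))

/-- The constant `κ = (δ − n/(n+π²))·(n+π²)/π²`. -/
def kappa (n : ℕ) (δ : ℝ) : ℝ :=
  (δ - (n : ℝ) / ((n : ℝ) + Real.pi ^ 2)) * (((n : ℝ) + Real.pi ^ 2) / Real.pi ^ 2)

/-- The invariant measure: measurable, `ℤⁿ`-periodic, square-integrable over `Y`,
with unit mass over `Y`, solving the stationary FPK equation in the very weak sense. -/
def IsInvariantMeasure {n : ℕ} (A : (Fin n → ℝ) → Matrix (Fin n) (Fin n) ℝ)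
    (b : (Fin n → ℝ) → Fin n → ℝ) (r : (Fin n → ℝ) → ℝ) : Prop :=
  Measurable r ∧ IsPeriodic r ∧
    IntegrableOn (fun x => (r x) ^ 2) (unitCell n) ∧
    (∫ x in unitCell n, r x) = 1 ∧
    ∀ φ : (Fin n → ℝ) → ℝ, ContDiff ℝ 2 φ → IsPeriodic φ →
      (∫ x in unitCell n,
        r x * (frobInner (A x) (hess φ x) + dotc (b x) (grad φ x))) = 0

/-- The bilinear form `B₂`. -/
def B2 {n : ℕ} (A : (Fin n → ℝ) → Matrix (Fin n) (Fin n) ℝ)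
    (b : (Fin n → ℝ) → Fin n → ℝ) (v w : (Fin n → ℝ) → Fin n → ℝ) : ℝ :=
  (∫ x in unitCell n,
    divg v x * (frobInner (gam A b x • A x) (jac w x) + dotc (gam A b x • b x) (w x)))
  + (1 / 2) * ∫ x in unitCell n,
      frobInner (jac v x - (jac v x).transpose) (jac w x - (jac w x).transpose)

/-- A very weak `L²_per(Y)` solution of `-D²:(Au) + ∇·(bu) = ∇·F` in `Y` with
periodic boundary conditions. -/
def IsWeakSolF {n : ℕ} (A : (Fin n → ℝ) → Matrix (Fin n) (Fin n) ℝ)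
    (b : (Fin n → ℝ) → Fin n → ℝ) (F : (Fin n → ℝ) → Fin n → ℝ)
    (u : (Fin n → ℝ) → ℝ) : Prop :=
  Measurable u ∧ IsPeriodic u ∧
    IntegrableOn (fun x => (u x) ^ 2) (unitCell n) ∧
    ∀ φ : (Fin n → ℝ) → ℝ, ContDiff ℝ 2 φ → IsPeriodic φ →
      (∫ x in unitCell n,
        u x * (frobInner (A x) (hess φ x) + dotc (b x) (grad φ x)))
        = -∫ x in unitCell n, dotc (F x) (grad φ x)

/-!
Write `L φ = A : D²φ + b · ∇φ` and `γ = tr A / (|A|² + |b|²)`. Pointwise, the Cordes condition says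
`|γA - I|² + |γb|² ≤ 1 - δ`. On the torus, Parseval gives `∫ |D²φ|² = ∫ (Δφ)²` and
`4π² ∫ |∇φ|² ≤ ∫ (Δφ)²`, so `‖γLφ - Δφ‖ ≤ t ‖Δφ‖` in `L²(Y)` with
`t² = (1 - δ)(1 + 1/(4π²)) < 1`.

Existence: `‖Δφ‖` is controlled by `‖γLφ‖`, so `γLφ ↦ -∫ F · ∇φ` is a bounded functional on the
range of `γL`. Riesz representation gives `z` with `⟪z, γLφ⟫ = -∫ F · ∇φ`, and `u = γz`.

Uniqueness: let `w` solve the homogeneous equation with `∫ w/γ = 0`. Functions orthogonal to the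
range of `Δ` are constant, so `w/γ` lies in the closure of that range; being orthogonal to the range
of `γL`, it satisfies `‖w/γ‖² ≤ t ‖w/γ‖²` and vanishes. Apply this first to `r`, to see that
`∫ r/γ ≠ 0`, and then to `u₁ - u₂ - c r` for the `c` that makes the weighted mean vanish.
-/

section Cell

variable {n : ℕ}

/-- Lebesgue measure on the unit cell `Y`. -/
abbrev cellMeasure (n : ℕ) : Measure (Fin n → ℝ) := volume.restrict (unitCell n)

instance isProbabilityMeasure_cellMeasure : IsProbabilityMeasure (cellMeasure n) := by
  constructor
  rw [Measure.restrict_apply_univ, unitCell, Real.volume_pi_Ioo]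
  simp

theorem measurableSet_unitCell (n : ℕ) : MeasurableSet (unitCell n) :=
  MeasurableSet.univ_pi fun _ => measurableSet_Ioo

theorem cellMeasure_eq_restrict_Icc (n : ℕ) :
    cellMeasure n = volume.restrict (Set.Icc (0 : Fin n → ℝ) 1) :=
  Measure.restrict_congr_set Measure.univ_pi_Ioo_ae_eq_Icc

theorem cellMeasure_eq_restrict_Ioc (n : ℕ) :
    cellMeasure n = volume.restrict {x : Fin n → ℝ |
      ∀ i, x i ∈ Set.Ioc ((0 : Fin n → ℝ) i) ((0 : Fin n → ℝ) i + 1)} := by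
  have hIoc : (Set.univ.pi fun i : Fin n => Set.Ioc ((0 : Fin n → ℝ) i) ((1 : Fin n → ℝ) i))
      =ᵐ[volume] Set.Icc (0 : Fin n → ℝ) 1 := by
    rw [← Set.pi_univ_Icc]
    exact Measure.pi_Ioc_ae_eq_pi_Icc
  rw [cellMeasure_eq_restrict_Icc, ← Measure.restrict_congr_set hIoc]
  congr 1
  ext x
  simp [Set.mem_pi]

theorem memLp_cellMeasure_of_continuous {E : Type*} [NormedAddCommGroup E]
    {f : (Fin n → ℝ) → E} (hf : Continuous f) (p : ENNReal) : MemLp f p (cellMeasure n) := by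
  obtain ⟨C, hC⟩ := (isCompact_Icc (a := (0 : Fin n → ℝ)) (b := 1)).exists_bound_of_continuousOn
    hf.continuousOn
  refine (memLp_top_of_bound hf.aestronglyMeasurable C ?_).mono_exponent le_top
  rw [cellMeasure_eq_restrict_Icc]
  filter_upwards [ae_restrict_mem measurableSet_Icc] with x hx using hC x hx

theorem integrable_cellMeasure_of_continuous {E : Type*} [NormedAddCommGroup E]
    {f : (Fin n → ℝ) → E} (hf : Continuous f) : Integrable f (cellMeasure n) :=
  memLp_one_iff_integrable.1 (memLp_cellMeasure_of_continuous hf 1)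

end Cell

section Periodic

variable {n : ℕ}

attribute [local instance] instMeasureSpaceUnitAddCircle

/-- The representative in `(0,1]ⁿ` of a point of the torus `ℝⁿ/ℤⁿ`. -/
def cellRep (t : UnitAddTorus (Fin n)) : Fin n → ℝ := fun i => AddCircle.equivIoc (1 : ℝ) 0 (t i)

theorem coe_cellRep (t : UnitAddTorus (Fin n)) (i : Fin n) : (cellRep t i : UnitAddCircle) = t i :=
  (AddCircle.equivIoc (1 : ℝ) 0).symm_apply_apply (t i)

theorem measurePreserving_cellRep :
    MeasurePreserving (cellRep (n := n)) volume (cellMeasure n) := by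
  rw [cellMeasure_eq_restrict_Ioc]
  exact (measurePreserving_subtype_coe (MeasurableSet.univ_pi' fun _ => measurableSet_Ioc)).comp
    (UnitAddTorus.measurePreserving_equivPiIoc 0)

theorem measurableEmbedding_cellRep : MeasurableEmbedding (cellRep (n := n)) :=
  (MeasurableEmbedding.subtype_coe (MeasurableSet.univ_pi' fun _ => measurableSet_Ioc)).comp
    (UnitAddTorus.measurableEquivPiIoc 0).measurableEmbedding

theorem integral_comp_cellRep {E : Type*} [NormedAddCommGroup E] [NormedSpace ℝ E]
    (f : (Fin n → ℝ) → E) : ∫ t, f (cellRep t) = ∫ x in unitCell n, f x :=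
  measurePreserving_cellRep.integral_comp measurableEmbedding_cellRep f

theorem IsPeriodic.cellRep_coe {α : Type*} {f : (Fin n → ℝ) → α} (hf : IsPeriodic f)
    (x : Fin n → ℝ) : f (cellRep fun i => (x i : UnitAddCircle)) = f x := by
  have hshift (i : Fin n) : ∃ k : ℤ, cellRep (fun i => (x i : UnitAddCircle)) i = x i + k := by
    obtain ⟨k, hk⟩ := QuotientAddGroup.eq_iff_sub_mem.1
      (coe_cellRep (fun i => (x i : UnitAddCircle)) i)
    refine ⟨k, ?_⟩
    simp only [zsmul_eq_mul, mul_one] at hk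
    linarith
  choose k hk using hshift
  rw [← hf x k]
  exact congrArg f (funext hk)

theorem IsPeriodic.integral_add_right {E : Type*} [NormedAddCommGroup E] [NormedSpace ℝ E]
    {f : (Fin n → ℝ) → E} (hf : IsPeriodic f) (h : Fin n → ℝ) :
    ∫ x in unitCell n, f (x + h) = ∫ x in unitCell n, f x := by
  have : (volume : Measure UnitAddCircle).IsAddHaarMeasure :=
    inferInstanceAs AddCircle.haarAddCircle.IsAddHaarMeasure
  have hrep (t : UnitAddTorus (Fin n)) :
      f (cellRep t + h) = f (cellRep (t + fun i => (h i : UnitAddCircle))) := by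
    rw [← hf.cellRep_coe]
    congr 2
    funext i
    simp [coe_cellRep]
  calc ∫ x in unitCell n, f (x + h)
      = ∫ t, f (cellRep (t + fun i => (h i : UnitAddCircle))) := by
        simp only [← integral_comp_cellRep, hrep]
    _ = ∫ x in unitCell n, f x := by
        rw [integral_add_right_eq_self fun t => f (cellRep t), integral_comp_cellRep]

theorem IsPeriodic.ae_eq_of_ae_eq_cell {α : Type*} {f g : (Fin n → ℝ) → α} (hf : IsPeriodic f)
    (hg : IsPeriodic g) (hfg : f =ᵐ[cellMeasure n] g) : f =ᵐ[volume] g := by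
  rw [cellMeasure_eq_restrict_Icc, Filter.EventuallyEq, ae_restrict_iff' measurableSet_Icc] at hfg
  have hshift : ∀ᵐ x ∂(volume : Measure (Fin n → ℝ)), ∀ k : Fin n → ℤ,
      (x + fun i => (k i : ℝ)) ∈ Set.Icc (0 : Fin n → ℝ) 1 →
        f (x + fun i => (k i : ℝ)) = g (x + fun i => (k i : ℝ)) :=
    ae_all_iff.2 fun k =>
      (measurePreserving_add_right volume fun i => (k i : ℝ)).quasiMeasurePreserving.ae hfg
  filter_upwards [hshift] with x hx
  rw [← hf x fun i => -⌊x i⌋, ← hg x fun i => -⌊x i⌋]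
  refine hx _ ⟨fun i => ?_, fun i => ?_⟩
  · simp [Int.floor_le]
  · have := (Int.lt_floor_add_one (x i)).le
    simp only [Int.cast_neg, Pi.add_apply, Pi.one_apply]
    linarith

theorem exists_measurable_isPeriodic_ae_eq {α : Type*} [MeasurableSpace α] {f : (Fin n → ℝ) → α}
    (hf : AEMeasurable f (cellMeasure n)) :
    ∃ g, Measurable g ∧ IsPeriodic g ∧ g =ᵐ[cellMeasure n] f := by
  refine ⟨fun x => hf.mk f fun i => Int.fract (x i), hf.measurable_mk.comp
    (measurable_pi_lambda _ fun i => measurable_fract.comp (measurable_pi_apply i)),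
    fun x k => by simp, ?_⟩
  filter_upwards [ae_restrict_mem (measurableSet_unitCell n), hf.ae_eq_mk] with x hx hmk
  have hfract : (fun i => Int.fract (x i)) = x :=
    funext fun i => Int.fract_eq_self.2 ⟨(hx i trivial).1.le, (hx i trivial).2⟩
  rw [hfract, ← hmk]

end Periodic

section PartialDerivative

variable {n : ℕ} {f : (Fin n → ℝ) → ℝ}

theorem continuous_pd (hf : ContDiff ℝ 1 f) (i : Fin n) : Continuous (pd f i) :=
  (hf.continuous_fderiv one_ne_zero).clm_apply continuous_const

theorem contDiff_pd (hf : ContDiff ℝ 2 f) (i : Fin n) : ContDiff ℝ 1 (pd f i) :=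
  (hf.fderiv_right (m := 1) (by norm_num)).clm_apply contDiff_const

theorem IsPeriodic.pd (hf : IsPeriodic f) (i : Fin n) : IsPeriodic (pd f i) := by
  intro x k
  rw [_root_.pd, _root_.pd, ← fderiv_comp_add_right, funext fun y => hf y k]

theorem hasDerivAt_comp_add_smul_single (hf : ContDiff ℝ 1 f) (i : Fin n) (x : Fin n → ℝ) (t : ℝ) :
    HasDerivAt (fun t : ℝ => f (x + t • Pi.single i 1)) (pd f i (x + t • Pi.single i 1)) t := by
  have hline : HasDerivAt (fun t : ℝ => x + t • (Pi.single i 1 : Fin n → ℝ)) (Pi.single i 1) t := by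
    simpa using ((hasDerivAt_id t).smul_const (Pi.single i 1 : Fin n → ℝ)).const_add x
  exact (hf.differentiable one_ne_zero _).hasFDerivAt.comp_hasDerivAt t hline

theorem hasDerivAt_integral_mul_comp_add_smul_single (hf : ContDiff ℝ 1 f)
    {ψ : (Fin n → ℝ) → ℂ} (hψ : Continuous ψ) (i : Fin n) :
    HasDerivAt (fun t : ℝ => ∫ x in unitCell n, ψ x * f (x + t • Pi.single i 1))
      (∫ x in unitCell n, ψ x * pd f i x) 0 := by
  have hf0 := hf.continuous
  have hf1 := continuous_pd hf i
  have hcont : Continuous fun z : (Fin n → ℝ) × ℝ =>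
      ψ z.1 * pd f i (z.1 + z.2 • Pi.single i 1) := by fun_prop
  obtain ⟨C, hC⟩ := ((isCompact_Icc (a := (0 : Fin n → ℝ)) (b := 1)).prod
    (isCompact_closedBall (0 : ℝ) 1)).exists_bound_of_continuousOn hcont.continuousOn
  have hderiv := (hasDerivAt_integral_of_dominated_loc_of_deriv_le (μ := cellMeasure n)
    (s := Metric.ball (0 : ℝ) 1) (bound := fun _ => C)
    (F := fun t x => ψ x * f (x + t • Pi.single i 1))
    (F' := fun t x => ψ x * pd f i (x + t • Pi.single i 1))
    (Metric.ball_mem_nhds 0 one_pos)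
    (.of_forall fun t => Continuous.aestronglyMeasurable (by fun_prop))
    (integrable_cellMeasure_of_continuous (by fun_prop))
    (Continuous.aestronglyMeasurable (by fun_prop)) ?_ (integrable_const C) ?_).2
  · simpa using hderiv
  · rw [cellMeasure_eq_restrict_Icc]
    filter_upwards [ae_restrict_mem measurableSet_Icc] with x hx t ht
    exact hC (x, t) ⟨hx, Metric.ball_subset_closedBall ht⟩
  · exact .of_forall fun x t _ =>
      (hasDerivAt_comp_add_smul_single hf i x t).ofReal_comp.const_mul (ψ x)

end PartialDerivative

section Fourier

variable {n : ℕ}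

attribute [local instance] instMeasureSpaceUnitAddCircle

/-- The character `x ↦ exp (2πi k·x)` of `ℝⁿ`. -/
def planeWave (k : Fin n → ℤ) (x : Fin n → ℝ) : ℂ :=
  Complex.exp ((2 * Real.pi * ∑ i, k i * x i : ℝ) * Complex.I)

theorem planeWave_coe (k : Fin n → ℤ) (x : Fin n → ℝ) :
    planeWave k x = UnitAddTorus.mFourier k fun i => (x i : UnitAddCircle) := by
  simp only [planeWave, UnitAddTorus.mFourier, ContinuousMap.coe_mk, fourier_coe_apply,
    ← Complex.exp_sum]
  push_cast
  rw [Finset.mul_sum, Finset.sum_mul]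
  exact congrArg Complex.exp (Finset.sum_congr rfl fun i _ => by ring)

theorem planeWave_cellRep (k : Fin n → ℤ) (t : UnitAddTorus (Fin n)) :
    planeWave k (cellRep t) = UnitAddTorus.mFourier k t := by
  rw [planeWave_coe, funext (coe_cellRep t)]

theorem isPeriodic_planeWave (k : Fin n → ℤ) : IsPeriodic (planeWave k) := by
  intro x m
  rw [planeWave_coe, planeWave_coe]
  congr 1
  funext i
  simp

theorem continuous_planeWave (k : Fin n → ℤ) : Continuous (planeWave k) := by
  unfold planeWave
  fun_prop

theorem planeWave_add (k : Fin n → ℤ) (x y : Fin n → ℝ) :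
    planeWave k (x + y) = planeWave k x * planeWave k y := by
  rw [planeWave, planeWave, planeWave, ← Complex.exp_add, ← add_mul, ← Complex.ofReal_add,
    ← mul_add, ← Finset.sum_add_distrib]
  simp only [Pi.add_apply, mul_add]

theorem planeWave_neg_mul_planeWave (k : Fin n → ℤ) (x : Fin n → ℝ) :
    planeWave (-k) x * planeWave k x = 1 := by
  simp [planeWave, ← Complex.exp_add]

theorem hasDerivAt_planeWave_smul_single (k : Fin n → ℤ) (i : Fin n) :
    HasDerivAt (fun t : ℝ => planeWave k (t • Pi.single i 1))
      (2 * Real.pi * k i * Complex.I) 0 := by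
  have hphase : HasDerivAt (fun t : ℝ => ((2 * Real.pi * (k i * t) : ℝ) : ℂ) * Complex.I)
      (2 * Real.pi * k i * Complex.I) 0 := by
    simpa using ((((hasDerivAt_id (0 : ℝ)).const_mul (k i : ℝ)).const_mul
      (2 * Real.pi)).ofReal_comp.mul_const Complex.I)
  simpa [planeWave, Pi.single_apply] using hphase.cexp

/-- The Fourier coefficients of `f`, seen as a function on the torus through its values on the
unit cell. -/
def cellFourierCoeff (f : (Fin n → ℝ) → ℝ) (k : Fin n → ℤ) : ℂ :=
  ∫ x in unitCell n, planeWave (-k) x * f x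

theorem hasSum_sq_cellFourierCoeff {f : (Fin n → ℝ) → ℝ} (hf : MemLp f 2 (cellMeasure n)) :
    HasSum (fun k => ‖cellFourierCoeff f k‖ ^ 2) (∫ x in unitCell n, f x ^ 2) := by
  have hlift := hf.ofReal (K := ℂ) |>.comp_measurePreserving measurePreserving_cellRep
  have hcoeff (k : Fin n → ℤ) :
      UnitAddTorus.mFourierCoeff (hlift.toLp _) k = cellFourierCoeff f k := by
    rw [cellFourierCoeff, ← integral_comp_cellRep]
    refine integral_congr_ae ?_
    filter_upwards [hlift.coeFn_toLp] with t ht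
    rw [ht, planeWave_cellRep]
    rfl
  have hnorm : ∫ t : UnitAddTorus (Fin n), ‖hlift.toLp _ t‖ ^ 2 = ∫ x in unitCell n, f x ^ 2 := by
    rw [← integral_comp_cellRep]
    refine integral_congr_ae ?_
    filter_upwards [hlift.coeFn_toLp] with t ht
    rw [ht]
    simp
  simpa only [hcoeff, hnorm] using UnitAddTorus.hasSum_sq_mFourierCoeff (hlift.toLp _)

theorem ae_eq_zero_of_cellFourierCoeff_eq_zero {f : (Fin n → ℝ) → ℝ}
    (hf : MemLp f 2 (cellMeasure n)) (h : ∀ k, cellFourierCoeff f k = 0) :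
    f =ᵐ[cellMeasure n] 0 := by
  have hsq : ∫ x in unitCell n, f x ^ 2 = 0 :=
    (hasSum_sq_cellFourierCoeff hf).unique (by simp [h])
  rw [integral_eq_zero_iff_of_nonneg (fun x => sq_nonneg _) hf.integrable_sq] at hsq
  filter_upwards [hsq] with x hx using pow_eq_zero_iff two_ne_zero |>.1 hx

theorem cellFourierCoeff_comp_add {f : (Fin n → ℝ) → ℝ} (hf : IsPeriodic f) (h : Fin n → ℝ)
    (k : Fin n → ℤ) :
    ∫ x in unitCell n, planeWave (-k) x * f (x + h) = planeWave k h * cellFourierCoeff f k := by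
  have hper : IsPeriodic fun x => planeWave (-k) x * f x := fun x m => by
    simp only [isPeriodic_planeWave _ x m, hf x m]
  rw [cellFourierCoeff, ← hper.integral_add_right h, ← integral_const_mul]
  congr 1
  funext x
  rw [planeWave_add, ← mul_assoc, mul_left_comm, mul_comm (planeWave k h),
    planeWave_neg_mul_planeWave, mul_one]

theorem cellFourierCoeff_pd {f : (Fin n → ℝ) → ℝ} (hf : ContDiff ℝ 1 f) (hper : IsPeriodic f)
    (i : Fin n) (k : Fin n → ℤ) :
    cellFourierCoeff (pd f i) k = 2 * Real.pi * k i * Complex.I * cellFourierCoeff f k := by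
  have hderiv := hasDerivAt_integral_mul_comp_add_smul_single hf (continuous_planeWave (-k)) i
  simp only [cellFourierCoeff_comp_add hper] at hderiv
  exact hderiv.unique ((hasDerivAt_planeWave_smul_single k i).mul_const _)

end Fourier

section Parseval

variable {n : ℕ} {φ : (Fin n → ℝ) → ℝ}

theorem norm_sq_cellFourierCoeff_pd {f : (Fin n → ℝ) → ℝ} (hf : ContDiff ℝ 1 f)
    (hper : IsPeriodic f) (i : Fin n) (k : Fin n → ℤ) :
    ‖cellFourierCoeff (pd f i) k‖ ^ 2 =
      4 * Real.pi ^ 2 * (k i : ℝ) ^ 2 * ‖cellFourierCoeff f k‖ ^ 2 := by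
  rw [cellFourierCoeff_pd hf hper]
  simp only [norm_mul, mul_pow, Complex.norm_I, Complex.norm_real, Complex.norm_intCast,
    Complex.norm_ofNat, Real.norm_eq_abs, sq_abs]
  ring

theorem continuous_pd_pd (hφ : ContDiff ℝ 2 φ) (i j : Fin n) : Continuous (pd (pd φ j) i) :=
  continuous_pd (contDiff_pd hφ j) i

theorem continuous_lap (hφ : ContDiff ℝ 2 φ) : Continuous (lap φ) :=
  continuous_finsetSum _ fun i _ => continuous_pd_pd hφ i i

theorem cellFourierCoeff_lap (hφ : ContDiff ℝ 2 φ) (hper : IsPeriodic φ) (k : Fin n → ℤ) :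
    cellFourierCoeff (lap φ) k =
      ((-(4 * Real.pi ^ 2 * euclSq fun i => (k i : ℝ)) : ℝ) : ℂ) * cellFourierCoeff φ k := by
  have hsum : cellFourierCoeff (lap φ) k = ∑ i, cellFourierCoeff (pd (pd φ i) i) k := by
    simp only [cellFourierCoeff, lap, Complex.ofReal_sum, Finset.mul_sum]
    refine integral_finsetSum _ fun i _ => integrable_cellMeasure_of_continuous ?_
    exact (continuous_planeWave _).mul (Complex.continuous_ofReal.comp (continuous_pd_pd hφ i i))
  rw [hsum, euclSq]
  push_cast
  rw [Finset.mul_sum, ← Finset.sum_neg_distrib, Finset.sum_mul]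
  refine Finset.sum_congr rfl fun i _ => ?_
  rw [cellFourierCoeff_pd (contDiff_pd hφ i) (hper.pd i),
    cellFourierCoeff_pd (hφ.of_le one_le_two) hper]
  linear_combination (4 * Real.pi ^ 2 * k i ^ 2 * cellFourierCoeff φ k) * Complex.I_sq

theorem hasSum_lap_sq (hφ : ContDiff ℝ 2 φ) (hper : IsPeriodic φ) :
    HasSum (fun k : Fin n → ℤ =>
        (4 * Real.pi ^ 2 * euclSq fun i => (k i : ℝ)) ^ 2 * ‖cellFourierCoeff φ k‖ ^ 2)
      (∫ x in unitCell n, lap φ x ^ 2) := by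
  have hsum := hasSum_sq_cellFourierCoeff (memLp_cellMeasure_of_continuous (continuous_lap hφ) 2)
  simpa only [cellFourierCoeff_lap hφ hper, norm_mul, mul_pow, Complex.norm_real, norm_neg,
    Real.norm_eq_abs, sq_abs] using hsum

theorem integrable_frobSq_hess (hφ : ContDiff ℝ 2 φ) :
    Integrable (fun x => frobSq (hess φ x)) (cellMeasure n) :=
  integrable_cellMeasure_of_continuous <| continuous_finsetSum _ fun i _ =>
    continuous_finsetSum _ fun j _ => (continuous_pd_pd hφ i j).pow 2

theorem integrable_euclSq_grad (hφ : ContDiff ℝ 1 φ) :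
    Integrable (fun x => euclSq (grad φ x)) (cellMeasure n) :=
  integrable_cellMeasure_of_continuous <| continuous_finsetSum _ fun i _ =>
    (continuous_pd hφ i).pow 2

theorem hasSum_frobSq_hess (hφ : ContDiff ℝ 2 φ) (hper : IsPeriodic φ) :
    HasSum (fun k : Fin n → ℤ =>
        (4 * Real.pi ^ 2 * euclSq fun i => (k i : ℝ)) ^ 2 * ‖cellFourierCoeff φ k‖ ^ 2)
      (∫ x in unitCell n, frobSq (hess φ x)) := by
  have hL2 (i j : Fin n) : MemLp (pd (pd φ j) i) 2 (cellMeasure n) :=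
    memLp_cellMeasure_of_continuous (continuous_pd_pd hφ i j) 2
  have hsum := hasSum_sum (s := Finset.univ) fun i _ => hasSum_sum (s := Finset.univ) fun j _ =>
    hasSum_sq_cellFourierCoeff (hL2 i j)
  convert hsum using 1
  · funext k
    simp only [norm_sq_cellFourierCoeff_pd (contDiff_pd hφ _) (hper.pd _),
      norm_sq_cellFourierCoeff_pd (hφ.of_le one_le_two) hper, mul_pow, sq (euclSq _)]
    simp only [euclSq, Finset.mul_sum, Finset.sum_mul]
    exact Finset.sum_congr rfl fun i _ => Finset.sum_congr rfl fun j _ => by ring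
  · simp only [frobSq, hess, Matrix.of_apply]
    rw [integral_finsetSum _ fun i _ => integrable_finsetSum _ fun j _ => (hL2 i j).integrable_sq]
    exact Finset.sum_congr rfl fun i _ => integral_finsetSum _ fun j _ => (hL2 i j).integrable_sq

theorem hasSum_euclSq_grad (hφ : ContDiff ℝ 1 φ) (hper : IsPeriodic φ) :
    HasSum (fun k : Fin n → ℤ =>
        (4 * Real.pi ^ 2 * euclSq fun i => (k i : ℝ)) * ‖cellFourierCoeff φ k‖ ^ 2)
      (∫ x in unitCell n, euclSq (grad φ x)) := by
  have hL2 (i : Fin n) : MemLp (pd φ i) 2 (cellMeasure n) :=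
    memLp_cellMeasure_of_continuous (continuous_pd hφ i) 2
  have hsum := hasSum_sum (s := Finset.univ) fun i _ => hasSum_sq_cellFourierCoeff (hL2 i)
  convert hsum using 1
  · funext k
    simp only [norm_sq_cellFourierCoeff_pd hφ hper, euclSq, Finset.mul_sum, Finset.sum_mul]
  · simp only [euclSq, grad]
    exact integral_finsetSum _ fun i _ => (hL2 i).integrable_sq

theorem integral_frobSq_hess_eq_integral_lap_sq (hφ : ContDiff ℝ 2 φ) (hper : IsPeriodic φ) :
    ∫ x in unitCell n, frobSq (hess φ x) = ∫ x in unitCell n, lap φ x ^ 2 :=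
  (hasSum_frobSq_hess hφ hper).unique (hasSum_lap_sq hφ hper)

theorem euclSq_intCast_le_sq (k : Fin n → ℤ) :
    (euclSq fun i => (k i : ℝ)) ≤ (euclSq fun i => (k i : ℝ)) ^ 2 := by
  simp only [euclSq]
  exact_mod_cast Int.le_self_sq (∑ i, k i ^ (2 : ℕ))

theorem integral_euclSq_grad_le (hφ : ContDiff ℝ 2 φ) (hper : IsPeriodic φ) :
    ∫ x in unitCell n, euclSq (grad φ x) ≤
      1 / (4 * Real.pi ^ 2) * ∫ x in unitCell n, lap φ x ^ 2 := by
  refine hasSum_le (fun k => ?_) (hasSum_euclSq_grad (hφ.of_le one_le_two) hper)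
    ((hasSum_lap_sq hφ hper).mul_left _)
  have hpi : 0 < 4 * Real.pi ^ 2 := by positivity
  rw [← mul_assoc]
  refine mul_le_mul_of_nonneg_right ?_ (sq_nonneg _)
  calc 4 * Real.pi ^ 2 * (euclSq fun i => (k i : ℝ))
      ≤ 4 * Real.pi ^ 2 * (euclSq fun i => (k i : ℝ)) ^ 2 :=
        mul_le_mul_of_nonneg_left (euclSq_intCast_le_sq k) hpi.le
    _ = 1 / (4 * Real.pi ^ 2) * (4 * Real.pi ^ 2 * euclSq fun i => (k i : ℝ)) ^ 2 := by
        field_simp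

theorem integral_lap_eq_zero (hφ : ContDiff ℝ 2 φ) (hper : IsPeriodic φ) :
    ∫ x in unitCell n, lap φ x = 0 := by
  have hcoeff := cellFourierCoeff_lap hφ hper 0
  simp only [cellFourierCoeff, planeWave, euclSq, Pi.zero_apply, neg_zero, Int.cast_zero,
    zero_mul, Finset.sum_const_zero, mul_zero, Complex.ofReal_zero, Complex.exp_zero, one_mul,
    zero_pow two_ne_zero] at hcoeff
  rw [integral_complex_ofReal] at hcoeff
  exact_mod_cast hcoeff

end Parseval

section Liouville

variable {n : ℕ}

/-- The real plane wave with frequency `k` and phase `s`: up to constants, the eigenfunctions of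
the periodic Laplacian. -/
def cosWave (k : Fin n → ℤ) (s : ℝ) (x : Fin n → ℝ) : ℝ :=
  Real.cos (2 * Real.pi * ∑ i, k i * x i + s)

theorem contDiff_cosWave (k : Fin n → ℤ) (s : ℝ) {m : WithTop ℕ∞} :
    ContDiff ℝ m (cosWave k s) := by
  unfold cosWave
  fun_prop

theorem isPeriodic_cosWave (k : Fin n → ℤ) (s : ℝ) : IsPeriodic (cosWave k s) := by
  intro x m
  have hphase : 2 * Real.pi * ∑ i, k i * (x i + m i) + s =
      2 * Real.pi * ∑ i, k i * x i + s + ((∑ i, k i * m i : ℤ) : ℝ) * (2 * Real.pi) := by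
    push_cast
    simp only [mul_add, Finset.sum_add_distrib]
    ring
  simp only [cosWave, Pi.add_apply]
  rw [hphase, Real.cos_add_int_mul_two_pi]

theorem pd_cosWave (k : Fin n → ℤ) (s : ℝ) (i : Fin n) :
    pd (cosWave k s) i = fun x => 2 * Real.pi * k i * cosWave k (s + Real.pi / 2) x := by
  funext x
  have hphase : HasDerivAt
      (fun t : ℝ => 2 * Real.pi * ∑ j, k j * (x + t • (Pi.single i 1 : Fin n → ℝ)) j + s)
      (2 * Real.pi * k i) 0 := by
    simpa [mul_add, Finset.sum_add_distrib, Pi.single_apply] using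
      (((hasDerivAt_id (0 : ℝ)).const_mul (k i : ℝ)).const_mul (2 * Real.pi)).const_add
        (2 * Real.pi * ∑ j, k j * x j) |>.add_const s
  have hline := hasDerivAt_comp_add_smul_single (contDiff_cosWave k s) i x 0
  rw [zero_smul, add_zero] at hline
  rw [hline.unique hphase.cos, cosWave, ← add_assoc, Real.cos_add_pi_div_two]
  simp [mul_comm]

theorem lap_cosWave (k : Fin n → ℤ) (s : ℝ) (x : Fin n → ℝ) :
    lap (cosWave k s) x = -(4 * Real.pi ^ 2 * euclSq fun i => (k i : ℝ)) * cosWave k s x := by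
  have hpd (i : Fin n) :
      pd (pd (cosWave k s) i) i x = -(2 * Real.pi * k i) ^ 2 * cosWave k s x := by
    have hmul := fderiv_const_mul ((contDiff_cosWave k (s + Real.pi / 2) (m := 1)).differentiable
      one_ne_zero x) (2 * Real.pi * k i)
    have hneg : cosWave k (s + Real.pi / 2 + Real.pi / 2) x = -cosWave k s x := by
      rw [cosWave, cosWave, add_assoc s, add_halves, ← add_assoc, Real.cos_add_pi]
    rw [pd_cosWave, pd, hmul, smul_apply, ← pd, pd_cosWave, smul_eq_mul]
    linear_combination (2 * Real.pi * k i) ^ 2 * hneg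
  simp only [lap, hpd, euclSq, Finset.mul_sum, ← Finset.sum_neg_distrib, Finset.sum_mul]
  exact Finset.sum_congr rfl fun i _ => by ring

theorem planeWave_neg_eq_cosWave (k : Fin n → ℤ) (x : Fin n → ℝ) :
    planeWave (-k) x = cosWave k 0 x + cosWave k (Real.pi / 2) x * Complex.I := by
  rw [planeWave, Complex.exp_mul_I, cosWave, cosWave, Real.cos_add_pi_div_two]
  simp

theorem cellFourierCoeff_eq_zero_of_integral_lap_mul_eq_zero {h : (Fin n → ℝ) → ℝ}
    (hh : Integrable h (cellMeasure n))
    (hlap : ∀ φ, ContDiff ℝ 2 φ → IsPeriodic φ → ∫ x in unitCell n, lap φ x * h x = 0)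
    {k : Fin n → ℤ} (hk : k ≠ 0) : cellFourierCoeff h k = 0 := by
  have hksq : 0 < euclSq fun i => (k i : ℝ) := by
    obtain ⟨i, hi⟩ := Function.ne_iff.1 hk
    exact Finset.sum_pos' (fun _ _ => sq_nonneg _)
      ⟨i, Finset.mem_univ i, by have : (k i : ℝ) ≠ 0 := Int.cast_ne_zero.2 hi; positivity⟩
  have hcos (s : ℝ) : ∫ x in unitCell n, cosWave k s x * h x = 0 := by
    have hwave := hlap _ (contDiff_cosWave k s) (isPeriodic_cosWave k s)
    simp only [lap_cosWave, mul_assoc _ (cosWave k s _), integral_const_mul] at hwave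
    exact (mul_eq_zero.1 hwave).resolve_left
      (neg_ne_zero.2 (mul_pos (by positivity) hksq).ne')
  have hint (s : ℝ) : Integrable (fun x => cosWave k s x * h x) (cellMeasure n) :=
    hh.mul_of_top_right
      (memLp_cellMeasure_of_continuous (contDiff_cosWave k s (m := 0)).continuous ⊤)
  have hsplit (x : Fin n → ℝ) : planeWave (-k) x * h x = ((cosWave k 0 x * h x : ℝ) : ℂ) +
      ((cosWave k (Real.pi / 2) x * h x : ℝ) : ℂ) * Complex.I := by
    rw [planeWave_neg_eq_cosWave]
    push_cast
    ring
  simp only [cellFourierCoeff, hsplit]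
  rw [integral_add (hint 0).ofReal ((hint _).ofReal.mul_const _), integral_mul_const,
    integral_complex_ofReal, integral_complex_ofReal, hcos, hcos]
  simp

theorem ae_eq_const_of_integral_lap_mul_eq_zero {h : (Fin n → ℝ) → ℝ}
    (hh : MemLp h 2 (cellMeasure n))
    (hlap : ∀ φ, ContDiff ℝ 2 φ → IsPeriodic φ → ∫ x in unitCell n, lap φ x * h x = 0) :
    h =ᵐ[cellMeasure n] fun _ => ∫ x in unitCell n, h x := by
  set m := ∫ x in unitCell n, h x with hm
  have hint : Integrable h (cellMeasure n) := hh.integrable one_le_two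
  have hcentered : MemLp (fun x => h x - m) 2 (cellMeasure n) := hh.sub (memLp_const m)
  have hlap_centered (φ : (Fin n → ℝ) → ℝ) (hφ : ContDiff ℝ 2 φ) (hper : IsPeriodic φ) :
      ∫ x in unitCell n, lap φ x * (h x - m) = 0 := by
    have hprod : Integrable (fun x => lap φ x * h x) (cellMeasure n) :=
      hint.mul_of_top_right (memLp_cellMeasure_of_continuous (continuous_lap hφ) ⊤)
    simp only [mul_sub]
    rw [integral_sub hprod ((integrable_cellMeasure_of_continuous (continuous_lap hφ)).mul_const m),
      hlap φ hφ hper, integral_mul_const, integral_lap_eq_zero hφ hper, zero_mul, sub_zero]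
  have hzero : (fun x => h x - m) =ᵐ[cellMeasure n] 0 := by
    refine ae_eq_zero_of_cellFourierCoeff_eq_zero hcentered fun k => ?_
    rcases eq_or_ne k 0 with rfl | hk
    · have hmean : ∫ x in unitCell n, (h x - m) = 0 := by
        rw [integral_sub hint (integrable_const m), integral_const, probReal_univ, one_smul, ← hm,
          sub_self]
      simp [cellFourierCoeff, planeWave, integral_complex_ofReal, hmean, -Complex.ofReal_sub]
    · exact cellFourierCoeff_eq_zero_of_integral_lap_mul_eq_zero
        (hcentered.integrable one_le_two) hlap_centered hk
  filter_upwards [hzero] with x hx using sub_eq_zero.1 hx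

end Liouville

section CoefficientAlgebra

variable {n : ℕ}

theorem frobSq_nonneg (M : Matrix (Fin n) (Fin n) ℝ) : 0 ≤ frobSq M :=
  Finset.sum_nonneg fun _ _ => Finset.sum_nonneg fun _ _ => sq_nonneg _

theorem euclSq_nonneg (v : Fin n → ℝ) : 0 ≤ euclSq v :=
  Finset.sum_nonneg fun _ _ => sq_nonneg _

theorem sq_apply_le_euclSq (v : Fin n → ℝ) (i : Fin n) : v i ^ 2 ≤ euclSq v :=
  Finset.single_le_sum (f := fun i => v i ^ 2) (fun _ _ => sq_nonneg _) (Finset.mem_univ i)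

theorem sq_apply_le_frobSq (M : Matrix (Fin n) (Fin n) ℝ) (i j : Fin n) : M i j ^ 2 ≤ frobSq M :=
  (sq_apply_le_euclSq (M i) j).trans (Finset.single_le_sum (f := fun i => euclSq (M i))
    (fun _ _ => euclSq_nonneg _) (Finset.mem_univ i))

theorem frobInner_add_dotc_sq_le (M H : Matrix (Fin n) (Fin n) ℝ) (v g : Fin n → ℝ) :
    (frobInner M H + dotc v g) ^ 2 ≤ (frobSq M + euclSq v) * (frobSq H + euclSq g) := by
  have hcs := Finset.sum_mul_sq_le_sq_mul_sq (Finset.univ : Finset ((Fin n × Fin n) ⊕ Fin n))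
    (Sum.elim (fun p => M p.1 p.2) v) (Sum.elim (fun p => H p.1 p.2) g)
  simpa only [frobInner, dotc, frobSq, euclSq, Fintype.sum_sum_type, Fintype.sum_prod_type,
    Sum.elim_inl, Sum.elim_inr] using hcs

theorem trace_sq_le_mul_frobSq (M : Matrix (Fin n) (Fin n) ℝ) : M.trace ^ 2 ≤ n * frobSq M := by
  have hcs := sq_sum_le_card_mul_sum_sq (s := (Finset.univ : Finset (Fin n))) (f := fun i => M i i)
  rw [Finset.card_univ, Fintype.card_fin] at hcs
  exact hcs.trans (mul_le_mul_of_nonneg_left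
    (Finset.sum_le_sum fun i _ => sq_apply_le_euclSq (M i) i) n.cast_nonneg)

theorem frobSq_smul_sub_one_add_euclSq_smul (c : ℝ) (M : Matrix (Fin n) (Fin n) ℝ)
    (v : Fin n → ℝ) :
    frobSq (c • M - 1) + euclSq (c • v) =
      c ^ 2 * (frobSq M + euclSq v) - 2 * c * M.trace + n := by
  have hentry (i j : Fin n) : ((c • M - 1) i j) ^ 2 =
      c ^ 2 * M i j ^ 2 + if i = j then 1 - 2 * c * M i j else 0 := by
    rcases eq_or_ne i j with rfl | hij
    · simp
      ring
    · simp [hij, mul_pow]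
  simp only [frobSq, hentry, euclSq, Pi.smul_apply, smul_eq_mul, mul_pow, Finset.sum_add_distrib,
    Finset.sum_ite_eq, Finset.mem_univ, if_true, Finset.sum_sub_distrib, ← Finset.mul_sum,
    Finset.sum_const, Finset.card_univ, Fintype.card_fin, nsmul_one, Matrix.trace, Matrix.diag]
  ring

end CoefficientAlgebra

section RealL2

variable {α : Type*} [MeasurableSpace α] {μ : Measure α} {f g : α → ℝ}

theorem inner_toLp_eq_integral_mul (hf : MemLp f 2 μ) (hg : MemLp g 2 μ) :
    inner ℝ (hf.toLp f) (hg.toLp g) = ∫ x, f x * g x ∂μ := by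
  rw [L2.inner_def]
  refine integral_congr_ae ?_
  filter_upwards [hf.coeFn_toLp, hg.coeFn_toLp] with x hfx hgx
  rw [hfx, hgx]
  exact mul_comm _ _

theorem norm_toLp_sq_eq_integral_sq (hf : MemLp f 2 μ) :
    ‖hf.toLp f‖ ^ 2 = ∫ x, f x ^ 2 ∂μ := by
  rw [← real_inner_self_eq_norm_sq, inner_toLp_eq_integral_mul]
  simp only [sq]

theorem memLp_top_of_sq_le (hf : AEMeasurable f μ) {C : ℝ} (h : ∀ᵐ x ∂μ, f x ^ 2 ≤ C) :
    MemLp f ⊤ μ := by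
  refine memLp_top_of_bound hf.aestronglyMeasurable (Real.sqrt C) ?_
  filter_upwards [h] with x hx using Real.abs_le_sqrt hx

/-- A linear map into square-integrable functions, as a map into `L²`. -/
def linearToLp {W : Type*} [AddCommGroup W] [Module ℝ W] (T : W →ₗ[ℝ] (α → ℝ))
    (hT : ∀ w, MemLp (T w) 2 μ) : W →ₗ[ℝ] Lp ℝ 2 μ where
  toFun w := (hT w).toLp (T w)
  map_add' v w := by
    rw [← MemLp.toLp_add]
    congr 1
    exact map_add T v w
  map_smul' c w := by
    rw [RingHom.id_apply, ← MemLp.toLp_const_smul]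
    congr 1
    exact map_smul T c w

end RealL2

section TestFunctions

variable {n : ℕ}

/-- The space of test functions: `ℤⁿ`-periodic functions of class `C²`. -/
def perC2 (n : ℕ) : Submodule ℝ ((Fin n → ℝ) → ℝ) where
  carrier := {φ | ContDiff ℝ 2 φ ∧ IsPeriodic φ}
  add_mem' hφ hψ := ⟨hφ.1.add hψ.1, fun x k => by simp [hφ.2 x k, hψ.2 x k]⟩
  zero_mem' := ⟨contDiff_const, fun _ _ => rfl⟩
  smul_mem' c φ hφ := ⟨contDiff_const.smul hφ.1, fun x k => by simp [hφ.2 x k]⟩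

theorem pd_add {f g : (Fin n → ℝ) → ℝ} (hf : ContDiff ℝ 1 f) (hg : ContDiff ℝ 1 g) (i : Fin n) :
    pd (f + g) i = pd f i + pd g i := by
  funext x
  simp [pd, fderiv_add (hf.differentiable one_ne_zero x) (hg.differentiable one_ne_zero x)]

theorem pd_smul {f : (Fin n → ℝ) → ℝ} (hf : ContDiff ℝ 1 f) (c : ℝ) (i : Fin n) :
    pd (c • f) i = c • pd f i := by
  funext x
  simp [pd, fderiv_const_smul (hf.differentiable one_ne_zero x) c]

/-- The nondivergence-form operator `φ ↦ A : D²φ + b · ∇φ` on test functions. -/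
def nondivOp (A : (Fin n → ℝ) → Matrix (Fin n) (Fin n) ℝ) (b : (Fin n → ℝ) → Fin n → ℝ) :
    perC2 n →ₗ[ℝ] ((Fin n → ℝ) → ℝ) where
  toFun φ x := frobInner (A x) (hess φ x) + dotc (b x) (grad φ x)
  map_add' φ ψ := by
    have hφ := φ.2.1.of_le one_le_two
    have hψ := ψ.2.1.of_le one_le_two
    funext x
    simp only [frobInner, dotc, hess, grad, Matrix.of_apply, Submodule.coe_add, pd_add hφ hψ,
      pd_add (contDiff_pd φ.2.1 _) (contDiff_pd ψ.2.1 _), Pi.add_apply, mul_add,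
      Finset.sum_add_distrib]
    ring
  map_smul' c φ := by
    have hφ := φ.2.1.of_le one_le_two
    funext x
    simp only [frobInner, dotc, hess, grad, Matrix.of_apply, Submodule.coe_smul, pd_smul hφ,
      pd_smul (contDiff_pd φ.2.1 _), Pi.smul_apply, smul_eq_mul, RingHom.id_apply, mul_add,
      Finset.mul_sum, mul_left_comm]

variable {A A' : (Fin n → ℝ) → Matrix (Fin n) (Fin n) ℝ} {b b' : (Fin n → ℝ) → Fin n → ℝ}

theorem nondivOp_smul_apply (c : (Fin n → ℝ) → ℝ) (φ : perC2 n) (x : Fin n → ℝ) :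
    nondivOp (fun x => c x • A x) (fun x => c x • b x) φ x = c x * nondivOp A b φ x := by
  simp only [nondivOp, LinearMap.coe_mk, AddHom.coe_mk, frobInner, dotc, Matrix.smul_apply,
    Pi.smul_apply, smul_eq_mul, mul_add, Finset.mul_sum, mul_assoc]

theorem nondivOp_sub_apply (φ : perC2 n) :
    nondivOp (A - A') (b - b') φ = nondivOp A b φ - nondivOp A' b' φ := by
  funext x
  simp only [nondivOp, LinearMap.coe_mk, AddHom.coe_mk, frobInner, dotc, Pi.sub_apply,
    Matrix.sub_apply, sub_mul, Finset.sum_sub_distrib]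
  ring

theorem nondivOp_one_zero_apply (φ : perC2 n) :
    nondivOp (1 : (Fin n → ℝ) → Matrix (Fin n) (Fin n) ℝ) 0 φ = lap φ := by
  funext x
  simp [nondivOp, frobInner, dotc, hess, lap, Matrix.one_apply]

theorem nondivOp_zero_single_apply (i : Fin n) (φ : perC2 n) :
    nondivOp (0 : (Fin n → ℝ) → Matrix (Fin n) (Fin n) ℝ) (fun _ => Pi.single i 1) φ =
      pd φ i := by
  funext x
  simp [nondivOp, frobInner, dotc, grad, Pi.single_apply]

end TestFunctions

section BoundedCoefficients

variable {n : ℕ} {A A' : (Fin n → ℝ) → Matrix (Fin n) (Fin n) ℝ}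
  {b b' : (Fin n → ℝ) → Fin n → ℝ}

/-- The coefficients `A` and `b` are essentially bounded on the unit cell, entry by entry. -/
structure IsBoundedCoeff (A : (Fin n → ℝ) → Matrix (Fin n) (Fin n) ℝ)
    (b : (Fin n → ℝ) → Fin n → ℝ) : Prop where
  memLp_matrix : ∀ i j, MemLp (fun x => A x i j) ⊤ (cellMeasure n)
  memLp_vector : ∀ i, MemLp (fun x => b x i) ⊤ (cellMeasure n)

namespace IsBoundedCoeff

theorem one_zero : IsBoundedCoeff (1 : (Fin n → ℝ) → Matrix (Fin n) (Fin n) ℝ) 0 :=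
  ⟨fun i j => memLp_const ((1 : Matrix (Fin n) (Fin n) ℝ) i j), fun _ => memLp_const 0⟩

theorem zero_single (i : Fin n) :
    IsBoundedCoeff (0 : (Fin n → ℝ) → Matrix (Fin n) (Fin n) ℝ) fun _ => Pi.single i 1 :=
  ⟨fun _ _ => memLp_const 0, fun j => memLp_const ((Pi.single i 1 : Fin n → ℝ) j)⟩

theorem sub (h : IsBoundedCoeff A b) (h' : IsBoundedCoeff A' b') :
    IsBoundedCoeff (A - A') (b - b') :=
  ⟨fun i j => (h.memLp_matrix i j).sub (h'.memLp_matrix i j),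
    fun i => (h.memLp_vector i).sub (h'.memLp_vector i)⟩

theorem smul (h : IsBoundedCoeff A b) {c : (Fin n → ℝ) → ℝ} (hc : MemLp c ⊤ (cellMeasure n)) :
    IsBoundedCoeff (fun x => c x • A x) fun x => c x • b x :=
  ⟨fun i j => (h.memLp_matrix i j).mul' hc, fun i => (h.memLp_vector i).mul' hc⟩

theorem memLp_nondivOp (h : IsBoundedCoeff A b) (φ : perC2 n) :
    MemLp (nondivOp A b φ) 2 (cellMeasure n) := by
  refine MemLp.mono_exponent (q := ⊤) (MemLp.add (memLp_finsetSum _ fun i _ =>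
    memLp_finsetSum _ fun j _ => ?_) (memLp_finsetSum _ fun i _ => ?_)) le_top
  · exact (memLp_cellMeasure_of_continuous (continuous_pd_pd φ.2.1 i j) ⊤).mul'
      (h.memLp_matrix i j)
  · exact (memLp_cellMeasure_of_continuous (continuous_pd (φ.2.1.of_le one_le_two) i) ⊤).mul'
      (h.memLp_vector i)

/-- The nondivergence-form operator with bounded coefficients, as a map from test functions to
`L²(Y)`. -/
def toL2 (h : IsBoundedCoeff A b) : perC2 n →ₗ[ℝ] Lp ℝ 2 (cellMeasure n) :=
  linearToLp (nondivOp A b) h.memLp_nondivOp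

theorem inner_toLp_toL2 (h : IsBoundedCoeff A b) {f : (Fin n → ℝ) → ℝ}
    (hf : MemLp f 2 (cellMeasure n)) (φ : perC2 n) :
    inner ℝ (hf.toLp f) (h.toL2 φ) = ∫ x in unitCell n, f x * nondivOp A b φ x :=
  inner_toLp_eq_integral_mul hf (h.memLp_nondivOp φ)

theorem toL2_sub_apply (h : IsBoundedCoeff A b) (h' : IsBoundedCoeff A' b') (φ : perC2 n) :
    (h.sub h').toL2 φ = h.toL2 φ - h'.toL2 φ := by
  simp only [toL2, linearToLp, LinearMap.coe_mk, AddHom.coe_mk, ← MemLp.toLp_sub,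
    nondivOp_sub_apply]

theorem norm_toL2_sq (h : IsBoundedCoeff A b) (φ : perC2 n) :
    ‖h.toL2 φ‖ ^ 2 = ∫ x in unitCell n, nondivOp A b φ x ^ 2 :=
  norm_toLp_sq_eq_integral_sq (h.memLp_nondivOp φ)

end IsBoundedCoeff

/-- The Laplacian as a map from test functions to `L²(Y)`. -/
def lapL2 (n : ℕ) : perC2 n →ₗ[ℝ] Lp ℝ 2 (cellMeasure n) := IsBoundedCoeff.one_zero.toL2

/-- The partial derivative `∂ᵢ` as a map from test functions to `L²(Y)`. -/
def pdL2 (i : Fin n) : perC2 n →ₗ[ℝ] Lp ℝ 2 (cellMeasure n) := (IsBoundedCoeff.zero_single i).toL2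

theorem norm_lapL2_sq (φ : perC2 n) : ‖lapL2 n φ‖ ^ 2 = ∫ x in unitCell n, lap φ x ^ 2 := by
  rw [lapL2, IsBoundedCoeff.norm_toL2_sq, nondivOp_one_zero_apply]

theorem inner_toLp_lapL2 {f : (Fin n → ℝ) → ℝ} (hf : MemLp f 2 (cellMeasure n)) (φ : perC2 n) :
    inner ℝ (hf.toLp f) (lapL2 n φ) = ∫ x in unitCell n, f x * lap φ x := by
  rw [lapL2, IsBoundedCoeff.inner_toLp_toL2, nondivOp_one_zero_apply]

theorem inner_toLp_pdL2 {f : (Fin n → ℝ) → ℝ} (hf : MemLp f 2 (cellMeasure n)) (i : Fin n)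
    (φ : perC2 n) : inner ℝ (hf.toLp f) (pdL2 i φ) = ∫ x in unitCell n, f x * pd φ i x := by
  rw [pdL2, IsBoundedCoeff.inner_toLp_toL2, nondivOp_zero_single_apply]

theorem integral_frobSq_hess_add_euclSq_grad_le {φ : (Fin n → ℝ) → ℝ} (hφ : ContDiff ℝ 2 φ)
    (hper : IsPeriodic φ) :
    ∫ x in unitCell n, (frobSq (hess φ x) + euclSq (grad φ x)) ≤
      (1 + 1 / (4 * Real.pi ^ 2)) * ∫ x in unitCell n, lap φ x ^ 2 := by
  have hhess := integrable_frobSq_hess hφ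
  have hgrad := integrable_euclSq_grad (hφ.of_le one_le_two)
  rw [integral_add hhess hgrad, integral_frobSq_hess_eq_integral_lap_sq hφ hper, add_mul, one_mul]
  exact add_le_add_right (integral_euclSq_grad_le hφ hper) _

theorem IsBoundedCoeff.norm_toL2_le (h : IsBoundedCoeff A b) {c : ℝ}
    (hc : ∀ᵐ x ∂cellMeasure n, frobSq (A x) + euclSq (b x) ≤ c) (φ : perC2 n) :
    ‖h.toL2 φ‖ ≤ Real.sqrt (c * (1 + 1 / (4 * Real.pi ^ 2))) * ‖lapL2 n φ‖ := by
  have hc0 : 0 ≤ c := by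
    obtain ⟨x, hx⟩ := hc.exists
    exact (add_nonneg (frobSq_nonneg _) (euclSq_nonneg _)).trans hx
  refine le_of_sq_le_sq ?_ (by positivity)
  rw [mul_pow, Real.sq_sqrt (by positivity), h.norm_toL2_sq, norm_lapL2_sq, mul_assoc]
  calc ∫ x in unitCell n, nondivOp A b φ x ^ 2
      ≤ ∫ x in unitCell n, c * (frobSq (hess φ x) + euclSq (grad φ x)) := by
        refine integral_mono_ae (h.memLp_nondivOp φ).integrable_sq
          (((integrable_frobSq_hess φ.2.1).add
            (integrable_euclSq_grad (φ.2.1.of_le one_le_two))).const_mul c) ?_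
        filter_upwards [hc] with x hx
        exact (frobInner_add_dotc_sq_le _ _ _ _).trans (mul_le_mul_of_nonneg_right hx
          (add_nonneg (frobSq_nonneg _) (euclSq_nonneg _)))
    _ = c * ∫ x in unitCell n, (frobSq (hess φ x) + euclSq (grad φ x)) := integral_const_mul _ _
    _ ≤ _ := mul_le_mul_of_nonneg_left
        (integral_frobSq_hess_add_euclSq_grad_le φ.2.1 φ.2.2) hc0

theorem norm_pdL2_le (i : Fin n) (φ : perC2 n) :
    ‖pdL2 i φ‖ ≤ Real.sqrt (1 + 1 / (4 * Real.pi ^ 2)) * ‖lapL2 n φ‖ := by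
  have hone : frobSq (0 : Matrix (Fin n) (Fin n) ℝ) + euclSq (Pi.single i 1) ≤ 1 := by
    simp [frobSq, euclSq, Pi.single_apply]
  simpa only [pdL2, one_mul] using
    (IsBoundedCoeff.zero_single i).norm_toL2_le (.of_forall fun _ => hone) φ

theorem ae_eq_const_of_forall_inner_lapL2_eq_zero {f : (Fin n → ℝ) → ℝ}
    (hf : MemLp f 2 (cellMeasure n)) (h : ∀ φ, inner ℝ (hf.toLp f) (lapL2 n φ) = 0) :
    f =ᵐ[cellMeasure n] fun _ => ∫ x in unitCell n, f x :=
  ae_eq_const_of_integral_lap_mul_eq_zero hf fun φ hφ hper => by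
    simpa only [inner_toLp_lapL2, mul_comm] using h ⟨φ, hφ, hper⟩

end BoundedCoefficients

section Perturbation

variable {W H : Type*} [AddCommGroup W] [Module ℝ W] [NormedAddCommGroup H]
  [InnerProductSpace ℝ H] [CompleteSpace H]

theorem exists_inner_eq_of_abs_le_mul_norm (L : W →ₗ[ℝ] H) (l : W →ₗ[ℝ] ℝ) {C : ℝ}
    (hl : ∀ w, |l w| ≤ C * ‖L w‖) : ∃ u : H, ∀ w, inner ℝ u (L w) = l w := by
  obtain ⟨s, hs⟩ := L.rangeRestrict.exists_rightInverse_of_surjective L.range_rangeRestrict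
  have hLs (y : LinearMap.range L) : L (s y) = y := congrArg Subtype.val (LinearMap.congr_fun hs y)
  have hls (w : W) : l (s (L.rangeRestrict w)) = l w := by
    refine sub_eq_zero.1 (abs_nonpos_iff.1 ?_)
    simpa [hLs] using hl (s (L.rangeRestrict w) - w)
  obtain ⟨f, hf, -⟩ := exists_extension_norm_eq (LinearMap.range L)
    ((l ∘ₗ s).mkContinuous C fun y => by simpa [hLs] using hl (s y))
  refine ⟨(InnerProductSpace.toDual ℝ H).symm f, fun w => ?_⟩
  rw [InnerProductSpace.toDual_symm_apply]
  exact (hf (L.rangeRestrict w)).trans (hls w)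

variable {D G : W →ₗ[ℝ] H} {t : ℝ}

theorem exists_inner_eq_of_norm_sub_le (ht : t < 1) (hGD : ∀ w, ‖G w - D w‖ ≤ t * ‖D w‖)
    {l : W →ₗ[ℝ] ℝ} {C : ℝ} (hl : ∀ w, |l w| ≤ C * ‖D w‖) :
    ∃ u : H, ∀ w, inner ℝ u (G w) = l w := by
  refine exists_inner_eq_of_abs_le_mul_norm G l (C := |C| / (1 - t)) fun w => ?_
  have hDG : (1 - t) * ‖D w‖ ≤ ‖G w‖ := by
    linarith [norm_sub_norm_le (D w) (G w), norm_sub_rev (D w) (G w), hGD w]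
  calc |l w| ≤ |C| * ‖D w‖ := (hl w).trans (by gcongr; exact le_abs_self C)
    _ ≤ |C| * (‖G w‖ / (1 - t)) := by
        gcongr
        rwa [le_div_iff₀' (sub_pos.2 ht)]
    _ = |C| / (1 - t) * ‖G w‖ := by ring

theorem eq_zero_of_inner_eq_zero_of_norm_sub_le (ht : t < 1)
    (hGD : ∀ w, ‖G w - D w‖ ≤ t * ‖D w‖) {g : H} (hg : ∀ w, inner ℝ g (G w) = 0)
    (hgD : ∀ z : H, (∀ w, inner ℝ z (D w) = 0) → inner ℝ z g = 0) : g = 0 := by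
  have hclosure : g ∈ closure (LinearMap.range D : Set H) := by
    rw [← Submodule.topologicalClosure_coe, ← Submodule.orthogonal_orthogonal_eq_closure]
    refine (Submodule.mem_orthogonal _ _).2 fun z hz => hgD z fun w => ?_
    exact (Submodule.mem_orthogonal' _ _).1 hz _ (LinearMap.mem_range_self D w)
  have hinner : closure (LinearMap.range D : Set H) ⊆ {y | inner ℝ g y ≤ ‖g‖ * (t * ‖y‖)} := by
    refine closure_minimal ?_ (isClosed_le (by fun_prop) (by fun_prop))
    rintro _ ⟨w, rfl⟩
    calc inner ℝ g (D w) = inner ℝ g (D w - G w) := by rw [inner_sub_right, hg, sub_zero]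
      _ ≤ ‖g‖ * ‖G w - D w‖ := norm_sub_rev (D w) (G w) ▸ real_inner_le_norm _ _
      _ ≤ ‖g‖ * (t * ‖D w‖) := by gcongr; exact hGD w
  have hself : inner ℝ g g ≤ ‖g‖ * (t * ‖g‖) := hinner hclosure
  rw [real_inner_self_eq_norm_sq] at hself
  by_contra hne
  have hpos : 0 < ‖g‖ := norm_pos_iff.2 hne
  nlinarith [mul_pos hpos hpos]

end Perturbation

section CordesCondition

variable {n : ℕ} {δ : ℝ}

section Pointwise

variable {M : Matrix (Fin n) (Fin n) ℝ} {v : Fin n → ℝ}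

theorem frobSq_add_euclSq_pos (htr : 0 < M.trace) : 0 < frobSq M + euclSq v := by
  have hM : 0 < n * frobSq M := (pow_pos htr 2).trans_le (trace_sq_le_mul_frobSq M)
  exact add_pos_of_pos_of_nonneg (pos_of_mul_pos_right hM n.cast_nonneg) (euclSq_nonneg v)

theorem sub_one_add_pos_of_cordes (htr : 0 < M.trace)
    (hc : (frobSq M + euclSq v) / M.trace ^ 2 ≤ 1 / ((n : ℝ) - 1 + δ)) : 0 < (n : ℝ) - 1 + δ :=
  one_div_pos.1 ((div_pos (frobSq_add_euclSq_pos htr) (pow_pos htr 2)).trans_le hc)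

theorem frobSq_add_euclSq_le_of_cordes (htr : 0 < M.trace)
    (hc : (frobSq M + euclSq v) / M.trace ^ 2 ≤ 1 / ((n : ℝ) - 1 + δ)) :
    frobSq M + euclSq v ≤ M.trace ^ 2 / ((n : ℝ) - 1 + δ) := by
  rw [div_le_iff₀ (pow_pos htr 2)] at hc
  exact hc.trans_eq (one_div_mul_eq_div _ _)

theorem trace_div_le (htr : 0 < M.trace) :
    M.trace / (frobSq M + euclSq v) ≤ n / M.trace := by
  rw [div_le_div_iff₀ (frobSq_add_euclSq_pos htr) htr, ← sq]
  exact (trace_sq_le_mul_frobSq M).trans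
    (mul_le_mul_of_nonneg_left (le_add_of_nonneg_right (euclSq_nonneg v)) n.cast_nonneg)

theorem inv_trace_div_le_of_cordes (htr : 0 < M.trace)
    (hc : (frobSq M + euclSq v) / M.trace ^ 2 ≤ 1 / ((n : ℝ) - 1 + δ)) :
    (M.trace / (frobSq M + euclSq v))⁻¹ ≤ M.trace / ((n : ℝ) - 1 + δ) := by
  rw [inv_div, div_le_iff₀ htr, div_mul_eq_mul_div, ← sq]
  exact frobSq_add_euclSq_le_of_cordes htr hc

theorem frobSq_renormalized_sub_one_le (htr : 0 < M.trace)
    (hc : (frobSq M + euclSq v) / M.trace ^ 2 ≤ 1 / ((n : ℝ) - 1 + δ)) :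
    frobSq ((M.trace / (frobSq M + euclSq v)) • M - 1) +
      euclSq ((M.trace / (frobSq M + euclSq v)) • v) ≤ 1 - δ := by
  have hS : 0 < frobSq M + euclSq v := frobSq_add_euclSq_pos htr
  have hle : (n : ℝ) - 1 + δ ≤ M.trace ^ 2 / (frobSq M + euclSq v) :=
    (le_div_comm₀ hS (sub_one_add_pos_of_cordes htr hc)).1
      (frobSq_add_euclSq_le_of_cordes htr hc)
  calc _ = n - M.trace ^ 2 / (frobSq M + euclSq v) := by
        rw [frobSq_smul_sub_one_add_euclSq_smul]
        field_simp
        ring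
    _ ≤ 1 - δ := by linarith

end Pointwise

variable {A : (Fin n → ℝ) → Matrix (Fin n) (Fin n) ℝ} {b : (Fin n → ℝ) → Fin n → ℝ}

/-- The Cordes condition with parameter `δ` on the unit cell, for measurable coefficients with
`tr A` bounded and bounded away from zero. -/
structure IsCordes (A : (Fin n → ℝ) → Matrix (Fin n) (Fin n) ℝ) (b : (Fin n → ℝ) → Fin n → ℝ)
    (δ : ℝ) : Prop where
  aemeasurable_matrix : ∀ i j, AEMeasurable (fun x => A x i j) (cellMeasure n)
  aemeasurable_vector : ∀ i, AEMeasurable (fun x => b x i) (cellMeasure n)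
  exists_trace_mem_Icc : ∃ τ T : ℝ, 0 < τ ∧ ∀ᵐ x ∂cellMeasure n, (A x).trace ∈ Set.Icc τ T
  cordes : ∀ᵐ x ∂cellMeasure n,
    (frobSq (A x) + euclSq (b x)) / (A x).trace ^ 2 ≤ 1 / ((n : ℝ) - 1 + δ)

namespace IsCordes

theorem ae_trace_pos (h : IsCordes A b δ) : ∀ᵐ x ∂cellMeasure n, 0 < (A x).trace := by
  obtain ⟨τ, T, hτ, hT⟩ := h.exists_trace_mem_Icc
  filter_upwards [hT] with x hx using hτ.trans_le hx.1

theorem sub_one_add_pos (h : IsCordes A b δ) : 0 < (n : ℝ) - 1 + δ := by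
  obtain ⟨x, htr, hc⟩ := (h.ae_trace_pos.and h.cordes).exists
  exact sub_one_add_pos_of_cordes htr hc

theorem ae_gam_pos (h : IsCordes A b δ) : ∀ᵐ x ∂cellMeasure n, 0 < gam A b x := by
  filter_upwards [h.ae_trace_pos] with x htr using div_pos htr (frobSq_add_euclSq_pos htr)

theorem isBoundedCoeff (h : IsCordes A b δ) : IsBoundedCoeff A b := by
  obtain ⟨τ, T, hτ, hT⟩ := h.exists_trace_mem_Icc
  have hbound : ∀ᵐ x ∂cellMeasure n,
      frobSq (A x) + euclSq (b x) ≤ T ^ 2 / ((n : ℝ) - 1 + δ) := by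
    filter_upwards [hT, h.cordes] with x hx hc
    have htr : 0 < (A x).trace := hτ.trans_le hx.1
    exact (frobSq_add_euclSq_le_of_cordes htr hc).trans
      (div_le_div_of_nonneg_right (pow_le_pow_left₀ htr.le hx.2 2) h.sub_one_add_pos.le)
  exact ⟨fun i j => memLp_top_of_sq_le (h.aemeasurable_matrix i j) <| hbound.mono fun x hx =>
      ((sq_apply_le_frobSq (A x) i j).trans (le_add_of_nonneg_right (euclSq_nonneg _))).trans hx,
    fun i => memLp_top_of_sq_le (h.aemeasurable_vector i) <| hbound.mono fun x hx =>
      ((sq_apply_le_euclSq (b x) i).trans (le_add_of_nonneg_left (frobSq_nonneg _))).trans hx⟩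

theorem aemeasurable_gam (h : IsCordes A b δ) : AEMeasurable (gam A b) (cellMeasure n) := by
  have hA := h.aemeasurable_matrix
  have hb := h.aemeasurable_vector
  unfold gam frobSq euclSq Matrix.trace Matrix.diag
  fun_prop

theorem memLp_gam (h : IsCordes A b δ) : MemLp (gam A b) ⊤ (cellMeasure n) := by
  obtain ⟨τ, T, hτ, hT⟩ := h.exists_trace_mem_Icc
  refine memLp_top_of_bound h.aemeasurable_gam.aestronglyMeasurable (n / τ) ?_
  filter_upwards [hT, h.ae_gam_pos] with x hx hγ
  rw [Real.norm_of_nonneg hγ.le]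
  exact (trace_div_le (hτ.trans_le hx.1)).trans
    (div_le_div_of_nonneg_left n.cast_nonneg hτ hx.1)

theorem memLp_inv_gam (h : IsCordes A b δ) : MemLp (fun x => (gam A b x)⁻¹) ⊤ (cellMeasure n) := by
  obtain ⟨τ, T, hτ, hT⟩ := h.exists_trace_mem_Icc
  refine memLp_top_of_bound h.aemeasurable_gam.inv.aestronglyMeasurable (T / ((n : ℝ) - 1 + δ)) ?_
  filter_upwards [hT, h.ae_gam_pos, h.cordes] with x hx hγ hc
  rw [Real.norm_of_nonneg (inv_nonneg.2 hγ.le)]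
  exact (inv_trace_div_le_of_cordes (hτ.trans_le hx.1) hc).trans
    (div_le_div_of_nonneg_right hx.2 h.sub_one_add_pos.le)

/-- The renormalized operator `φ ↦ γ (A : D²φ + b · ∇φ)`, as a map from test functions to
`L²(Y)`. -/
def gamL2 (h : IsCordes A b δ) : perC2 n →ₗ[ℝ] Lp ℝ 2 (cellMeasure n) :=
  (h.isBoundedCoeff.smul h.memLp_gam).toL2

theorem inner_toLp_gamL2 (h : IsCordes A b δ) {f : (Fin n → ℝ) → ℝ}
    (hf : MemLp f 2 (cellMeasure n)) (φ : perC2 n) :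
    inner ℝ (hf.toLp f) (h.gamL2 φ) =
      ∫ x in unitCell n, gam A b x * f x * nondivOp A b φ x := by
  rw [gamL2, IsBoundedCoeff.inner_toLp_toL2]
  simp only [nondivOp_smul_apply, mul_left_comm, mul_assoc]

theorem norm_gamL2_sub_lapL2_le (h : IsCordes A b δ) (φ : perC2 n) :
    ‖h.gamL2 φ - lapL2 n φ‖ ≤
      Real.sqrt ((1 - δ) * (1 + 1 / (4 * Real.pi ^ 2))) * ‖lapL2 n φ‖ := by
  rw [gamL2, lapL2, ← IsBoundedCoeff.toL2_sub_apply]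
  refine IsBoundedCoeff.norm_toL2_le _ ?_ φ
  filter_upwards [h.ae_trace_pos, h.cordes] with x htr hc
  simpa only [Pi.sub_apply, Pi.one_apply, Pi.zero_apply, sub_zero, gam] using
    frobSq_renormalized_sub_one_le htr hc

end IsCordes

theorem sqrt_perturbation_lt_one (hδ : 1 / (1 + 4 * Real.pi ^ 2) < δ) :
    Real.sqrt ((1 - δ) * (1 + 1 / (4 * Real.pi ^ 2))) < 1 := by
  have hpi : 0 < 4 * Real.pi ^ 2 := by positivity
  rw [Real.sqrt_lt' one_pos, one_pow]
  rw [div_lt_iff₀ (by positivity)] at hδ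
  field_simp
  linarith

end CordesCondition

section WeakSolutions

variable {n : ℕ} {δ : ℝ} {A : (Fin n → ℝ) → Matrix (Fin n) (Fin n) ℝ}
  {b F : (Fin n → ℝ) → Fin n → ℝ} {u v r w : (Fin n → ℝ) → ℝ}

namespace IsWeakSolF

theorem memLp (hu : IsWeakSolF A b F u) : MemLp u 2 (cellMeasure n) :=
  (memLp_two_iff_integrable_sq hu.1.aestronglyMeasurable).2 hu.2.2.1

theorem integral_mul_nondivOp (hu : IsWeakSolF A b F u) (φ : perC2 n) :
    ∫ x in unitCell n, u x * nondivOp A b φ x = -∫ x in unitCell n, dotc (F x) (grad φ x) :=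
  hu.2.2.2 φ φ.2.1 φ.2.2

theorem const_smul (hu : IsWeakSolF A b F u) (c : ℝ) : IsWeakSolF A b (c • F) (c • u) := by
  refine ⟨hu.1.const_smul c, fun x k => congrArg (c • ·) (hu.2.1 x k),
    (hu.memLp.const_smul c).integrable_sq, fun φ hφ hper => ?_⟩
  simp only [Pi.smul_apply, smul_eq_mul, dotc, mul_assoc, ← Finset.mul_sum, integral_const_mul]
  rw [← mul_neg]
  exact congrArg (c * ·) (hu.2.2.2 φ hφ hper)

theorem sub (hAb : IsBoundedCoeff A b) (hu : IsWeakSolF A b F u) (hv : IsWeakSolF A b F v) :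
    IsWeakSolF A b 0 (u - v) := by
  refine ⟨hu.1.sub hv.1, fun x k => congrArg₂ (· - ·) (hu.2.1 x k) (hv.2.1 x k),
    (hu.memLp.sub hv.memLp).integrable_sq, fun φ hφ hper => ?_⟩
  have hop := hAb.memLp_nondivOp ⟨φ, hφ, hper⟩
  calc ∫ x in unitCell n, (u - v) x * nondivOp A b ⟨φ, hφ, hper⟩ x
      = (∫ x in unitCell n, u x * nondivOp A b ⟨φ, hφ, hper⟩ x) -
          ∫ x in unitCell n, v x * nondivOp A b ⟨φ, hφ, hper⟩ x := by
        simp only [Pi.sub_apply, sub_mul]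
        exact integral_sub (hu.memLp.integrable_mul hop) (hv.memLp.integrable_mul hop)
    _ = 0 := by rw [hu.integral_mul_nondivOp, hv.integral_mul_nondivOp, sub_self]
    _ = -∫ x in unitCell n, dotc ((0 : (Fin n → ℝ) → Fin n → ℝ) x) (grad φ x) := by simp [dotc]

end IsWeakSolF

theorem IsInvariantMeasure.isWeakSolF (hr : IsInvariantMeasure A b r) : IsWeakSolF A b 0 r :=
  ⟨hr.1, hr.2.1, hr.2.2.1, fun φ hφ hper => by simpa [dotc] using hr.2.2.2.2 φ hφ hper⟩

section WeakDivergence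

variable (hF : ∀ i, MemLp (fun x => F x i) 2 (cellMeasure n))

/-- The functional `φ ↦ -∫_Y F · ∇φ` on test functions, i.e. the weak divergence of `F`. -/
def weakDiv : perC2 n →ₗ[ℝ] ℝ := -∑ i, (innerSL ℝ ((hF i).toLp _)).toLinearMap ∘ₗ pdL2 i

theorem weakDiv_apply_eq_neg_sum_inner (φ : perC2 n) :
    weakDiv hF φ = -∑ i, inner ℝ ((hF i).toLp _) (pdL2 i φ) := by
  simp [weakDiv, LinearMap.sum_apply]

theorem weakDiv_apply_eq_neg_integral (φ : perC2 n) :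
    weakDiv hF φ = -∫ x in unitCell n, dotc (F x) (grad φ x) := by
  have hint (i : Fin n) : Integrable (fun x => F x i * pd φ i x) (cellMeasure n) :=
    (hF i).integrable_mul
      (memLp_cellMeasure_of_continuous (continuous_pd (φ.2.1.of_le one_le_two) i) 2)
  simp only [weakDiv_apply_eq_neg_sum_inner, inner_toLp_pdL2, dotc, grad]
  rw [integral_finsetSum _ fun i _ => hint i]

theorem abs_weakDiv_le (φ : perC2 n) :
    |weakDiv hF φ| ≤
      (∑ i, ‖(hF i).toLp _‖) * Real.sqrt (1 + 1 / (4 * Real.pi ^ 2)) * ‖lapL2 n φ‖ := by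
  rw [weakDiv_apply_eq_neg_sum_inner, abs_neg, mul_assoc, Finset.sum_mul]
  refine (Finset.abs_sum_le_sum_abs _ _).trans (Finset.sum_le_sum fun i _ => ?_)
  exact (abs_real_inner_le_norm _ _).trans
    (mul_le_mul_of_nonneg_left (norm_pdL2_le i φ) (norm_nonneg _))

end WeakDivergence

theorem IsCordes.exists_isWeakSolF (h : IsCordes A b δ) (hδ : 1 / (1 + 4 * Real.pi ^ 2) < δ)
    (hF : ∀ i, MemLp (fun x => F x i) 2 (cellMeasure n)) : ∃ u, IsWeakSolF A b F u := by
  obtain ⟨z, hz⟩ := exists_inner_eq_of_norm_sub_le (sqrt_perturbation_lt_one hδ)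
    h.norm_gamL2_sub_lapL2_le (abs_weakDiv_le hF)
  have hγz : MemLp (fun x => gam A b x * z x) 2 (cellMeasure n) := (Lp.memLp z).mul' h.memLp_gam
  obtain ⟨u, hmeas, hper, hu⟩ :=
    exists_measurable_isPeriodic_ae_eq hγz.aestronglyMeasurable.aemeasurable
  refine ⟨u, hmeas, hper, ((memLp_congr_ae hu).2 hγz).integrable_sq, fun φ hφ hφper => ?_⟩
  calc ∫ x in unitCell n, u x * nondivOp A b ⟨φ, hφ, hφper⟩ x
      = ∫ x in unitCell n, gam A b x * z x * nondivOp A b ⟨φ, hφ, hφper⟩ x := by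
        refine integral_congr_ae ?_
        filter_upwards [hu] with x hx
        rw [hx]
    _ = inner ℝ z (h.gamL2 ⟨φ, hφ, hφper⟩) := by
        rw [← h.inner_toLp_gamL2 (Lp.memLp z), Lp.toLp_coeFn]
    _ = -∫ x in unitCell n, dotc (F x) (grad φ x) := by
        rw [hz, weakDiv_apply_eq_neg_integral]

theorem IsCordes.ae_eq_zero_of_integral_inv_gam_mul_eq_zero (h : IsCordes A b δ)
    (hδ : 1 / (1 + 4 * Real.pi ^ 2) < δ) (hw : IsWeakSolF A b 0 w)
    (hmean : ∫ x in unitCell n, (gam A b x)⁻¹ * w x = 0) : w =ᵐ[cellMeasure n] 0 := by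
  have hg : MemLp (fun x => (gam A b x)⁻¹ * w x) 2 (cellMeasure n) := hw.memLp.mul' h.memLp_inv_gam
  have horth (φ : perC2 n) : inner ℝ (hg.toLp _) (h.gamL2 φ) = 0 := by
    calc inner ℝ (hg.toLp _) (h.gamL2 φ) = ∫ x in unitCell n, w x * nondivOp A b φ x := by
          rw [h.inner_toLp_gamL2]
          refine integral_congr_ae ?_
          filter_upwards [h.ae_gam_pos] with x hx
          rw [mul_inv_cancel_left₀ hx.ne']
      _ = 0 := by simp [hw.integral_mul_nondivOp, dotc]
  have hconst (z : Lp ℝ 2 (cellMeasure n)) (hz : ∀ φ, inner ℝ z (lapL2 n φ) = 0) :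
      inner ℝ z (hg.toLp _) = 0 := by
    have hz_const := ae_eq_const_of_forall_inner_lapL2_eq_zero (Lp.memLp z) fun φ => by
      rw [Lp.toLp_coeFn, hz]
    calc inner ℝ z (hg.toLp _) = ∫ x in unitCell n, z x * ((gam A b x)⁻¹ * w x) := by
          rw [← inner_toLp_eq_integral_mul (Lp.memLp z), Lp.toLp_coeFn]
      _ = ∫ x in unitCell n, (∫ y in unitCell n, z y) * ((gam A b x)⁻¹ * w x) := by
          refine integral_congr_ae ?_
          filter_upwards [hz_const] with x hx
          rw [hx]
      _ = 0 := by rw [integral_const_mul, hmean, mul_zero]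
  have hzero : hg.toLp _ = 0 := eq_zero_of_inner_eq_zero_of_norm_sub_le
    (sqrt_perturbation_lt_one hδ) h.norm_gamL2_sub_lapL2_le horth hconst
  have hzero_ae := hg.coeFn_toLp.symm.trans (Lp.eq_zero_iff_ae_eq_zero.1 hzero)
  filter_upwards [hzero_ae, h.ae_gam_pos] with x hx hγ
  exact (mul_eq_zero.1 hx).resolve_left (inv_ne_zero hγ.ne')

theorem IsCordes.exists_ae_eq_const_mul (h : IsCordes A b δ)
    (hδ : 1 / (1 + 4 * Real.pi ^ 2) < δ) (hr : IsInvariantMeasure A b r)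
    (hv : IsWeakSolF A b 0 v) : ∃ c : ℝ, ∀ᵐ x, v x = c * r x := by
  have hrsol := hr.isWeakSolF
  have hr_ne : ∫ x in unitCell n, (gam A b x)⁻¹ * r x ≠ 0 := fun hmean => by
    have hr_mass := hr.2.2.2.1
    rw [integral_congr_ae (h.ae_eq_zero_of_integral_inv_gam_mul_eq_zero hδ hrsol hmean)] at hr_mass
    simp at hr_mass
  set c := (∫ x in unitCell n, (gam A b x)⁻¹ * v x) / ∫ x in unitCell n, (gam A b x)⁻¹ * r x
    with hc
  have hcr : IsWeakSolF A b 0 (c • r) := by simpa only [smul_zero] using hrsol.const_smul c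
  have hint {f : (Fin n → ℝ) → ℝ} (hf : IsWeakSolF A b 0 f) :
      Integrable (fun x => (gam A b x)⁻¹ * f x) (cellMeasure n) :=
    (hf.memLp.mul' h.memLp_inv_gam).integrable one_le_two
  have hmean : ∫ x in unitCell n, (gam A b x)⁻¹ * (v - c • r) x = 0 := by
    simp only [Pi.sub_apply, mul_sub]
    rw [integral_sub (hint hv) (hint hcr)]
    simp only [Pi.smul_apply, smul_eq_mul, mul_left_comm _ c, integral_const_mul]
    rw [hc, div_mul_cancel₀ _ hr_ne, sub_self]
  refine ⟨c, hv.2.1.ae_eq_of_ae_eq_cell hcr.2.1 ?_⟩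
  filter_upwards [h.ae_eq_zero_of_integral_inv_gam_mul_eq_zero hδ
    (hv.sub h.isBoundedCoeff hcr) hmean] with x hx using sub_eq_zero.1 hx

end WeakSolutions

theorem stmt_2_general {n : ℕ} {A : (Fin n → ℝ) → Matrix (Fin n) (Fin n) ℝ}
    {b : (Fin n → ℝ) → Fin n → ℝ} {δ : ℝ} (hAb : IsCordes A b δ)
    (hδ : 1 / (1 + 4 * Real.pi ^ 2) < δ) {F : (Fin n → ℝ) → Fin n → ℝ}
    (hF : ∀ i, MemLp (fun x => F x i) 2 (cellMeasure n)) :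
    (∃ u : (Fin n → ℝ) → ℝ, IsWeakSolF A b F u) ∧
      ∀ r : (Fin n → ℝ) → ℝ, IsInvariantMeasure A b r →
        ∀ u₁ u₂ : (Fin n → ℝ) → ℝ, IsWeakSolF A b F u₁ → IsWeakSolF A b F u₂ →
          ∃ c : ℝ, ∀ᵐ x ∂(volume : Measure (Fin n → ℝ)), u₁ x - u₂ x = c * r x :=
  ⟨hAb.exists_isWeakSolF hδ hF, fun _ hr _ _ hu₁ hu₂ =>
    hAb.exists_ae_eq_const_mul hδ hr (hu₁.sub hAb.isBoundedCoeff hu₂)⟩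

section SettingB

variable {n : ℕ} {A : (Fin n → ℝ) → Matrix (Fin n) (Fin n) ℝ} {b F : (Fin n → ℝ) → Fin n → ℝ}
  {lam Lam δ : ℝ}

theorem SettingB.ae_trace_mem_Icc (h : SettingB A b lam Lam δ) :
    ∀ᵐ x, (A x).trace ∈ Set.Icc (n * lam) (n * Lam) := by
  filter_upwards [h.ellip] with x hx
  have hdiag (i : Fin n) : lam ≤ A x i i ∧ A x i i ≤ Lam := by
    simpa [euclSq, dotc, Pi.single_apply, Matrix.mulVec_single] using hx (Pi.single i 1)
  constructor
  · simpa [Matrix.trace] using Finset.card_nsmul_le_sum Finset.univ _ lam fun i _ => (hdiag i).1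
  · simpa [Matrix.trace] using Finset.sum_le_card_nsmul Finset.univ _ Lam fun i _ => (hdiag i).2

theorem SettingB.isCordes (hn : 1 ≤ n) (h : SettingB A b lam Lam δ) : IsCordes A b δ where
  aemeasurable_matrix i j := (h.measA i j).aemeasurable
  aemeasurable_vector i := (h.measb i).aemeasurable
  exists_trace_mem_Icc := ⟨n * lam, n * Lam, mul_pos (Nat.cast_pos.2 hn) h.lam_pos,
    ae_restrict_of_ae h.ae_trace_mem_Icc⟩
  cordes := ae_restrict_of_ae h.cordes

theorem SettingB.lt_delta (hn : 1 ≤ n) (h : SettingB A b lam Lam δ) :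
    1 / (1 + 4 * Real.pi ^ 2) < δ := by
  have hn' : (1 : ℝ) ≤ n := Nat.one_le_cast.2 hn
  have hpi : 0 < Real.pi ^ 2 := by positivity
  refine lt_trans ?_ h.delta_mem.1
  rw [div_lt_div_iff₀ (by positivity) (by positivity)]
  nlinarith

theorem memLp_apply_of_integrableOn_euclSq (hF_meas : ∀ i, Measurable fun x => F x i)
    (hF : IntegrableOn (fun x => euclSq (F x)) (unitCell n)) (i : Fin n) :
    MemLp (fun x => F x i) 2 (cellMeasure n) :=
  (memLp_two_iff_integrable_sq (hF_meas i).aestronglyMeasurable).2 <|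
    hF.mono' ((hF_meas i).pow_const 2).aestronglyMeasurable <| .of_forall fun x => by
      rw [Real.norm_of_nonneg (sq_nonneg _)]
      exact sq_apply_le_euclSq (F x) i

end SettingB

/-- In Setting B, for `F ∈ L²_per(Y;ℝⁿ)` the nonhomogeneous stationary
FPK problem `-D²:(Au) + ∇·(bu) = ∇·F` admits a very weak solution `u ∈ L²_per(Y)`,
and any two solutions differ a.e. by a constant multiple of the invariant measure. -/
theorem stmt_2 {n : ℕ} (hn : 1 ≤ n)
    (A : (Fin n → ℝ) → Matrix (Fin n) (Fin n) ℝ) (b : (Fin n → ℝ) → Fin n → ℝ)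
    (lam Lam δ : ℝ) (hAB : SettingB A b lam Lam δ)
    (F : (Fin n → ℝ) → Fin n → ℝ) (hF_meas : ∀ i, Measurable fun x => F x i)
    (hF_per : IsPeriodic F)
    (hF_L2 : IntegrableOn (fun x => euclSq (F x)) (unitCell n)) :
    (∃ u : (Fin n → ℝ) → ℝ, IsWeakSolF A b F u) ∧
      ∀ r : (Fin n → ℝ) → ℝ, IsInvariantMeasure A b r →
        ∀ u₁ u₂ : (Fin n → ℝ) → ℝ, IsWeakSolF A b F u₁ → IsWeakSolF A b F u₂ →
          ∃ c : ℝ, ∀ᵐ x ∂(volume : Measure (Fin n → ℝ)), u₁ x - u₂ x = c * r x :=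
  stmt_2_general (hAB.isCordes hn) (hAB.lt_delta hn)
    (memLp_apply_of_integrableOn_euclSq hF_meas hF_L2)
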